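/- There exists a constant C > 0 such that for every R with 0 < R < e^{-1} and every φ ∈ H¹(ℝ², ℂ), 4 ∬_{ℝ²×ℝ²} |K_R(x − y) · ∇φ(x)|² |φ(y)|² dx dy ≤ C |log R|² ‖φ‖_{H¹}⁴. (The left-hand side equals ‖v(x−y) φ(x)φ(y)‖²_{L²(ℝ⁴)} for the mixed two-body operator v(x−y) = −i∇_x·∇^⊥w_R(x−y) + ∇^⊥w_R(x−y)·(−i∇_x).) -/

import Mathlib

noncomputable section
open MeasureTheory ENNReal
open scoped RealInnerProductSpace

/-- The plane `ℝ²`. -/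
abbrev E2 : Type := EuclideanSpace ℝ (Fin 2)

/-- The rotation by 90 degrees: `x^⊥ = (-x₂, x₁)`. -/
def perp (x : E2) : E2 := (WithLp.equiv 2 (Fin 2 → ℝ)).symm ![-(x 1), x 0]

/-- The Aharonov–Bohm kernel `K_R(x) = x^⊥ / (max R ‖x‖)²` (with `K_R 0 = 0`,
also when `R = 0`, by the junk-value convention `(0 : ℝ)⁻¹ = 0`). -/
def K (R : ℝ) (x : E2) : E2 := ((max R ‖x‖) ^ 2)⁻¹ • perp x

/-- The standard basis of `ℝ²`. -/
def e2 (j : Fin 2) : E2 := EuclideanSpace.single j 1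

/-- Componentwise convolution of the vector kernel `K_R` with a scalar density. -/
def convKs (R : ℝ) (ρ : E2 → ℝ) (x : E2) : E2 := ∫ y, ρ y • K R (x - y)

/-- Convolution of the vector kernel `K_R` with a vector field, summed over components. -/
def convKv (R : ℝ) (F : E2 → E2) (x : E2) : ℝ := ∫ y, ⟪K R (x - y), F y⟫

/-- The current `J[u] = i(u∇ū - ū∇u) = 2 Im(ū ∇u)`, an `ℝ²`-valued function. -/
def Jf (u : E2 → ℂ) (x : E2) : E2 :=
  (WithLp.equiv 2 (Fin 2 → ℝ)).symm fun j =>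
    2 * ((starRingEnd ℂ) (u x) * fderiv ℝ u x (e2 j)).im

/-- The `H¹` norm `(‖u‖₂² + ‖∇u‖₂²)^{1/2}` (extended-real valued). -/
def H1 (u : E2 → ℂ) : ℝ≥0∞ :=
  (eLpNorm u 2 volume ^ 2 + eLpNorm (fun x => fderiv ℝ u x) 2 volume ^ 2) ^ (1 / 2 : ℝ)

/-- The `H²` norm `(‖u‖₂² + ‖∇u‖₂² + ‖∇²u‖₂²)^{1/2}` (extended-real valued). -/
def H2 (u : E2 → ℂ) : ℝ≥0∞ :=
  (eLpNorm u 2 volume ^ 2 + eLpNorm (fun x => fderiv ℝ u x) 2 volume ^ 2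
    + eLpNorm (fun x => fderiv ℝ (fderiv ℝ u) x) 2 volume ^ 2) ^ (1 / 2 : ℝ)

/-!
For fixed `x`, write `y = x - rθ` in polar coordinates. By the fundamental theorem of calculus and
the Cauchy–Schwarz inequality with weight `t`, on each ray `h(t) = ψ(x - tθ)` satisfies
`‖h r‖² ≤ 2 ‖h s‖² + 2 log (s / r) ∫ t ‖h'(t)‖² dt`, and averaging over `s ∈ (1, 2]` bounds
`‖h r‖²`, `r ≤ 1`, by `1 + log (2 / r)` times the `H¹` energy of the ray. One factor `|log R|` is
this logarithm, cut off at radius `R`; the other is `∫_R^1 r |K_R|² dr = ∫_R^1 dr / r`. For `r ≥ 1`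
the kernel is bounded by `1`. Integrating over `θ` gives a bound for `∫ |K_R(x - y)|² ‖ψ y‖² dy`
that is uniform in `x`.
-/

section Lintegral

variable {α : Type*} [MeasurableSpace α] {μ : Measure α}

lemma sq_lintegral_le_lintegral_inv_mul_lintegral {w g : α → ℝ≥0∞} (hw : AEMeasurable w μ)
    (hg : AEMeasurable g μ) (hw_zero : ∀ᵐ a ∂μ, w a ≠ 0) (hw_top : ∀ᵐ a ∂μ, w a ≠ ⊤) :
    (∫⁻ a, g a ∂μ) ^ 2 ≤ (∫⁻ a, (w a)⁻¹ ∂μ) * ∫⁻ a, w a * g a ^ 2 ∂μ := by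
  have sq_sqrt (c : ℝ≥0∞) : (c ^ (1 / 2 : ℝ)) ^ 2 = c := by
    rw [← ENNReal.rpow_natCast, ← ENNReal.rpow_mul]; norm_num
  have factor : ∫⁻ a, g a ∂μ = ∫⁻ a, (((w a)⁻¹ ^ (1 / 2 : ℝ)) * (w a ^ (1 / 2 : ℝ) * g a)) ∂μ := by
    refine lintegral_congr_ae ?_
    filter_upwards [hw_zero, hw_top] with a h0 htop
    rw [← mul_assoc, ← ENNReal.mul_rpow_of_nonneg _ _ (by norm_num),
      ENNReal.inv_mul_cancel h0 htop, ENNReal.one_rpow, one_mul]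
  have cauchy_schwarz := ENNReal.lintegral_mul_le_Lp_mul_Lq μ .two_two
    (f := fun a => (w a)⁻¹ ^ (1 / 2 : ℝ)) (g := fun a => w a ^ (1 / 2 : ℝ) * g a)
    (by fun_prop) (by fun_prop)
  simp only [Pi.mul_apply, ENNReal.rpow_two, mul_pow, sq_sqrt] at cauchy_schwarz
  rw [factor]
  exact (pow_le_pow_left' cauchy_schwarz 2).trans_eq (by rw [mul_pow, sq_sqrt, sq_sqrt])

lemma eLpNorm_two_sq {ε : Type*} [ENorm ε] (f : α → ε) :
    eLpNorm f 2 μ ^ 2 = ∫⁻ a, ‖f a‖ₑ ^ 2 ∂μ := by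
  simpa using eLpNorm_nnreal_pow_eq_lintegral (f := f) (μ := μ) (p := 2) two_ne_zero

end Lintegral

lemma lintegral_Ioc_inv_ofReal {r s : ℝ} (hr : 0 < r) (hrs : r ≤ s) :
    ∫⁻ t in Set.Ioc r s, (ENNReal.ofReal t)⁻¹ = ENNReal.ofReal (Real.log (s / r)) := by
  have hpos : ∀ t ∈ Set.Ioc r s, 0 < t := fun t ht => hr.trans ht.1
  have hint : IntegrableOn (fun t : ℝ => t⁻¹) (Set.Ioc r s) := by
    rw [← intervalIntegrable_iff_integrableOn_Ioc_of_le hrs, intervalIntegrable_inv_iff,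
      Set.uIcc_of_le hrs]
    exact .inr fun h => h.1.not_gt hr
  rw [← integral_inv_of_pos hr (hr.trans_le hrs), intervalIntegral.integral_of_le hrs,
    ofReal_integral_eq_lintegral_ofReal hint
      ((ae_restrict_mem measurableSet_Ioc).mono fun t ht => inv_nonneg.2 (hpos t ht).le)]
  exact setLIntegral_congr_fun measurableSet_Ioc
    fun t ht => (ENNReal.ofReal_inv_of_pos (hpos t ht)).symm

lemma sq_lintegral_Ioc_le_log_mul_lintegral {g : ℝ → ℝ≥0∞} {r s : ℝ}
    (hg : AEMeasurable g (volume.restrict (Set.Ioc r s))) (hr : 0 < r) (hrs : r ≤ s) :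
    (∫⁻ t in Set.Ioc r s, g t) ^ 2 ≤
      ENNReal.ofReal (Real.log (s / r)) * ∫⁻ t in Set.Ioc r s, ENNReal.ofReal t * g t ^ 2 := by
  rw [← lintegral_Ioc_inv_ofReal hr hrs]
  refine sq_lintegral_le_lintegral_inv_mul_lintegral (by fun_prop) hg ?_
    (.of_forall fun _ => ENNReal.ofReal_ne_top)
  filter_upwards [ae_restrict_mem measurableSet_Ioc] with t ht
  exact (ENNReal.ofReal_pos.2 (hr.trans ht.1)).ne'

lemma lintegral_eq_lintegral_toSphere {E : Type*} [NormedAddCommGroup E] [NormedSpace ℝ E]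
    [FiniteDimensional ℝ E] [MeasurableSpace E] [BorelSpace E] [Nontrivial E] (μ : Measure E)
    [μ.IsAddHaarMeasure] {f : E → ℝ≥0∞} (hf : Measurable f) :
    ∫⁻ x, f x ∂μ = ∫⁻ θ : Metric.sphere (0 : E) 1, (∫⁻ r in Set.Ioi (0 : ℝ),
      ENNReal.ofReal (r ^ (Module.finrank ℝ E - 1)) * f (r • (θ : E))) ∂μ.toSphere := by
  have hf_polar : Measurable fun p : Metric.sphere (0 : E) 1 × Set.Ioi (0 : ℝ) =>
      f ((p.2 : ℝ) • (p.1 : E)) := hf.comp (by fun_prop)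
  have f_eq_polar (x : ({0}ᶜ : Set E)) : f x =
      f (((homeomorphUnitSphereProd E x).2 : ℝ) • ((homeomorphUnitSphereProd E x).1 : E)) := by
    simp [smul_smul, norm_ne_zero_iff.2 x.2]
  calc ∫⁻ x, f x ∂μ
      = ∫⁻ x : ({0}ᶜ : Set E), f x ∂μ.comap Subtype.val := by
        rw [lintegral_subtype_comap (measurableSet_singleton _).compl f, restrict_compl_singleton]
    _ = ∫⁻ θ, ∫⁻ r : Set.Ioi (0 : ℝ), f ((r : ℝ) • (θ : E))
          ∂Measure.volumeIoiPow (Module.finrank ℝ E - 1) ∂μ.toSphere := by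
        simp_rw [f_eq_polar]
        rw [μ.measurePreserving_homeomorphUnitSphereProd.lintegral_comp hf_polar,
          lintegral_prod _ hf_polar.aemeasurable]
    _ = _ := by
        refine lintegral_congr fun θ => ?_
        have hf_ray : Measurable fun r : Set.Ioi (0 : ℝ) => f ((r : ℝ) • (θ : E)) :=
          hf.comp (by fun_prop)
        rw [Measure.volumeIoiPow, lintegral_withDensity_eq_lintegral_mul₀ (by fun_prop)
          hf_ray.aemeasurable, ← lintegral_subtype_comap measurableSet_Ioi]
        simp only [Pi.mul_apply]

section Ray

variable {F : Type*} [NormedAddCommGroup F] [NormedSpace ℝ F]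

/-- The `H¹` energy `∫₀^∞ t (‖h‖² + ‖h'‖²) dt` of a function on a ray, where `t` is the radial
density of planar Lebesgue measure. -/
def rayEnergy (h : ℝ → F) : ℝ≥0∞ :=
  ∫⁻ t in Set.Ioi (0 : ℝ), ENNReal.ofReal t * (‖h t‖ₑ ^ 2 + ‖deriv h t‖ₑ ^ 2)

lemma lintegral_Ioi_one_sq_le_rayEnergy (h : ℝ → F) :
    ∫⁻ t in Set.Ioi (1 : ℝ), ‖h t‖ₑ ^ 2 ≤ rayEnergy h :=
  calc _ ≤ ∫⁻ t in Set.Ioi (1 : ℝ), ENNReal.ofReal t * (‖h t‖ₑ ^ 2 + ‖deriv h t‖ₑ ^ 2) := by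
        refine setLIntegral_mono' measurableSet_Ioi fun t ht => ?_
        have one_le : 1 ≤ ENNReal.ofReal t := ENNReal.one_le_ofReal.2 (Set.mem_Ioi.1 ht).le
        exact le_self_add.trans (le_mul_of_one_le_left' one_le)
    _ ≤ _ := lintegral_mono_set (Set.Ioi_subset_Ioi zero_le_one)

lemma lintegral_mul_sq_deriv_le_rayEnergy (h : ℝ → F) {s : Set ℝ} (hs : s ⊆ Set.Ioi 0) :
    ∫⁻ t in s, ENNReal.ofReal t * ‖deriv h t‖ₑ ^ 2 ≤ rayEnergy h :=
  (lintegral_mono fun _ => mul_le_mul_right le_add_self _).trans (lintegral_mono_set hs)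

variable [CompleteSpace F]

lemma enorm_sub_le_lintegral_enorm_deriv {h : ℝ → F} {a b : ℝ} (hab : a ≤ b)
    (hcont : ContinuousOn h (Set.Icc a b)) (hdiff : DifferentiableOn ℝ h (Set.Ioo a b)) :
    ‖h b - h a‖ₑ ≤ ∫⁻ t in Set.Ioc a b, ‖deriv h t‖ₑ := by
  rcases eq_top_or_lt_top (∫⁻ t in Set.Ioc a b, ‖deriv h t‖ₑ) with htop | hfin
  · simp only [htop, le_top]
  have hint : IntervalIntegrable (deriv h) volume a b :=
    (intervalIntegrable_iff_integrableOn_Ioc_of_le hab).2 ⟨aestronglyMeasurable_deriv h _, hfin⟩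
  rw [← intervalIntegral.integral_eq_sub_of_hasDerivAt_of_le hab hcont
    (fun t ht => (hdiff.differentiableAt (isOpen_Ioo.mem_nhds ht)).hasDerivAt) hint,
    intervalIntegral.integral_of_le hab]
  exact enorm_integral_le_lintegral_enorm _

lemma enorm_sq_le_log_mul_lintegral_deriv {h : ℝ → F} (hh : DifferentiableOn ℝ h (Set.Ioi 0))
    {r s : ℝ} (hr : 0 < r) (hrs : r ≤ s) :
    ‖h r‖ₑ ^ 2 ≤ 2 * (‖h s‖ₑ ^ 2 + ENNReal.ofReal (Real.log (s / r)) *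
      ∫⁻ t in Set.Ioc r s, ENNReal.ofReal t * ‖deriv h t‖ₑ ^ 2) := by
  have increment : ‖h s - h r‖ₑ ≤ ∫⁻ t in Set.Ioc r s, ‖deriv h t‖ₑ :=
    enorm_sub_le_lintegral_enorm_deriv hrs
      (hh.continuousOn.mono fun t ht => hr.trans_le ht.1) (hh.mono fun t ht => hr.trans ht.1)
  calc ‖h r‖ₑ ^ 2 = ‖h s - (h s - h r)‖ₑ ^ 2 := by rw [sub_sub_self]
    _ ≤ (‖h s‖ₑ + ‖h s - h r‖ₑ) ^ 2 := by gcongr; exact enorm_sub_le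
    _ ≤ 2 * (‖h s‖ₑ ^ 2 + ‖h s - h r‖ₑ ^ 2) := by
        simpa [show (2 : ℝ) - 1 = 1 by norm_num] using
          ENNReal.rpow_add_le_mul_rpow_add_rpow ‖h s‖ₑ ‖h s - h r‖ₑ one_le_two
    _ ≤ _ := by
        gcongr
        exact (pow_le_pow_left' increment 2).trans (sq_lintegral_Ioc_le_log_mul_lintegral
          (aestronglyMeasurable_deriv h _).enorm hr hrs)

lemma enorm_sq_le_log_mul_rayEnergy {h : ℝ → F} (hh : DifferentiableOn ℝ h (Set.Ioi 0))
    {r : ℝ} (hr : 0 < r) (hr1 : r ≤ 1) :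
    ‖h r‖ₑ ^ 2 ≤ ENNReal.ofReal (2 * (1 + Real.log (2 / r))) * rayEnergy h := by
  have log_nonneg : 0 ≤ Real.log (2 / r) := Real.log_nonneg (by rw [le_div_iff₀ hr]; linarith)
  have volume_Ioc : volume (Set.Ioc (1 : ℝ) 2) = 1 := by norm_num
  have pointwise : ∀ s ∈ Set.Ioc (1 : ℝ) 2, ‖h r‖ₑ ^ 2 ≤
      2 * (‖h s‖ₑ ^ 2 + ENNReal.ofReal (Real.log (2 / r)) * rayEnergy h) := by
    intro s hs
    have hrs : r ≤ s := hr1.trans hs.1.le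
    refine (enorm_sq_le_log_mul_lintegral_deriv hh hr hrs).trans ?_
    gcongr
    · exact div_pos (hr.trans_le hrs) hr
    · exact hs.2
    · exact lintegral_mul_sq_deriv_le_rayEnergy h fun t ht => hr.trans ht.1
  calc ‖h r‖ₑ ^ 2 = ∫⁻ _ in Set.Ioc (1 : ℝ) 2, ‖h r‖ₑ ^ 2 := by
        rw [setLIntegral_const, volume_Ioc, mul_one]
    _ ≤ ∫⁻ s in Set.Ioc (1 : ℝ) 2,
          2 * (‖h s‖ₑ ^ 2 + ENNReal.ofReal (Real.log (2 / r)) * rayEnergy h) :=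
        setLIntegral_mono' measurableSet_Ioc pointwise
    _ = 2 * ((∫⁻ s in Set.Ioc (1 : ℝ) 2, ‖h s‖ₑ ^ 2) +
          ENNReal.ofReal (Real.log (2 / r)) * rayEnergy h) := by
        rw [lintegral_const_mul' _ _ ENNReal.ofNat_ne_top,
          lintegral_add_right _ measurable_const, setLIntegral_const, volume_Ioc, mul_one]
    _ ≤ 2 * (rayEnergy h + ENNReal.ofReal (Real.log (2 / r)) * rayEnergy h) := by
        gcongr
        exact (lintegral_mono_set Set.Ioc_subset_Ioi_self).trans
          (lintegral_Ioi_one_sq_le_rayEnergy h)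
    _ = _ := by
        rw [ENNReal.ofReal_mul zero_le_two, ENNReal.ofReal_add zero_le_one log_nonneg,
          ENNReal.ofReal_ofNat, ENNReal.ofReal_one]
        ring

end Ray

section RadialWeight

open scoped Real

/-- The profile of `‖K_R‖²`, as a function of the radius `r = ‖x‖`. -/
def radialWeight (R r : ℝ) : ℝ := (r / max R r ^ 2) ^ 2

lemma radialWeight_nonneg (R r : ℝ) : 0 ≤ radialWeight R r := sq_nonneg _

@[fun_prop]
lemma measurable_radialWeight (R : ℝ) : Measurable (radialWeight R) := by
  unfold radialWeight; fun_prop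

lemma mul_radialWeight_le_one (R : ℝ) {r : ℝ} (hr : 1 ≤ r) : r * radialWeight R r ≤ 1 := by
  have hr0 : 0 < r := by linarith
  calc r * radialWeight R r ≤ r * (r / r ^ 2) ^ 2 := by
        unfold radialWeight; gcongr; exact le_max_right R r
    _ = 1 / r := by field_simp
    _ ≤ 1 := (div_le_one hr0).2 hr

lemma mul_radialWeight_mul_log_le {R r : ℝ} (hR : 0 < R) (hr : 0 < r) :
    r * radialWeight R r * (2 * (1 + Real.log (2 / r))) ≤ 4 * (1 + log⁺ R⁻¹) * (max R r)⁻¹ := by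
  have log_two_le_one : Real.log 2 ≤ 1 := by linarith [Real.log_two_lt_d9]
  have neg_log_le_posLog : -Real.log R ≤ log⁺ R⁻¹ := by
    rw [← Real.log_inv]; exact le_max_right _ _
  have posLog_nonneg : 0 ≤ log⁺ R⁻¹ := Real.posLog_nonneg
  have log_eq : Real.log (2 / r) = Real.log 2 - Real.log r := Real.log_div two_ne_zero hr.ne'
  unfold radialWeight
  rcases le_total r R with hrR | hRr
  · rw [max_eq_left hrR]
    have ratio_le_one : r / R ≤ 1 := (div_le_one hR).2 hrR
    have ratio_nonneg : 0 ≤ r / R := by positivity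
    have log_ratio_le : Real.log R - Real.log r ≤ R / r - 1 := by
      rw [← Real.log_div hR.ne' hr.ne']
      exact Real.log_le_sub_one_of_pos (by positivity)
    have log_le : 1 + Real.log (2 / r) ≤ 1 + log⁺ R⁻¹ + R / r := by linarith
    calc r * (r / R ^ 2) ^ 2 * (2 * (1 + Real.log (2 / r)))
        ≤ r * (r / R ^ 2) ^ 2 * (2 * (1 + log⁺ R⁻¹ + R / r)) := by gcongr
      _ = 2 * ((1 + log⁺ R⁻¹) * (r / R) ^ 3 + (r / R) ^ 2) * R⁻¹ := by field_simp
      _ ≤ 2 * ((1 + log⁺ R⁻¹) * 1 + 1) * R⁻¹ := by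
          gcongr <;> exact pow_le_one₀ ratio_nonneg ratio_le_one
      _ ≤ 4 * (1 + log⁺ R⁻¹) * R⁻¹ :=
          mul_le_mul_of_nonneg_right (by linarith) (inv_nonneg.2 hR.le)
  · rw [max_eq_right hRr]
    have log_R_le : Real.log R ≤ Real.log r := Real.log_le_log hR hRr
    calc r * (r / r ^ 2) ^ 2 * (2 * (1 + Real.log (2 / r)))
        = 2 * (1 + Real.log (2 / r)) * r⁻¹ := by field_simp
      _ ≤ 4 * (1 + log⁺ R⁻¹) * r⁻¹ :=
          mul_le_mul_of_nonneg_right (by linarith) (inv_nonneg.2 hr.le)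

lemma lintegral_Ioc_inv_max_le {R : ℝ} (hR : 0 < R) :
    ∫⁻ r in Set.Ioc 0 1, ENNReal.ofReal (max R r)⁻¹ ≤ ENNReal.ofReal (1 + log⁺ R⁻¹) := by
  have log_eq : Real.log (max R 1 / R) = log⁺ R⁻¹ := by
    rw [Real.posLog_eq_log_max_one (by positivity), ← max_div_div_right hR.le, div_self hR.ne',
      one_div]
  have inner : ∫⁻ r in Set.Ioc 0 R, ENNReal.ofReal (max R r)⁻¹ = 1 := by
    rw [setLIntegral_congr_fun measurableSet_Ioc
      (g := fun _ => (ENNReal.ofReal R)⁻¹) fun r hr => ?_, setLIntegral_const, Real.volume_Ioc,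
      sub_zero, ENNReal.inv_mul_cancel (ENNReal.ofReal_pos.2 hR).ne' ENNReal.ofReal_ne_top]
    rw [max_eq_left hr.2, ENNReal.ofReal_inv_of_pos hR]
  have outer : ∫⁻ r in Set.Ioc R (max R 1), ENNReal.ofReal (max R r)⁻¹ =
      ENNReal.ofReal (log⁺ R⁻¹) := by
    rw [← log_eq, ← lintegral_Ioc_inv_ofReal hR (le_max_left R 1)]
    refine setLIntegral_congr_fun measurableSet_Ioc fun r hr => ?_
    rw [max_eq_right hr.1.le, ENNReal.ofReal_inv_of_pos (hR.trans hr.1)]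
  calc _ ≤ ∫⁻ r in Set.Ioc 0 R ∪ Set.Ioc R (max R 1), ENNReal.ofReal (max R r)⁻¹ := by
        refine lintegral_mono_set ?_
        rw [Set.Ioc_union_Ioc_eq_Ioc hR.le (le_max_left R 1)]
        exact Set.Ioc_subset_Ioc_right (le_max_right R 1)
    _ ≤ 1 + ENNReal.ofReal (log⁺ R⁻¹) := by
        rw [← inner, ← outer]; exact lintegral_union_le _ _ _
    _ = _ := by rw [ENNReal.ofReal_add zero_le_one Real.posLog_nonneg, ENNReal.ofReal_one]

variable {F : Type*} [NormedAddCommGroup F] [NormedSpace ℝ F]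

lemma lintegral_Ioi_one_radialWeight_mul_sq_le (h : ℝ → F) (R : ℝ) :
    ∫⁻ r in Set.Ioi (1 : ℝ), ENNReal.ofReal (r * radialWeight R r) * ‖h r‖ₑ ^ 2 ≤
      rayEnergy h := by
  refine le_trans (setLIntegral_mono' measurableSet_Ioi fun r hr => ?_)
    (lintegral_Ioi_one_sq_le_rayEnergy h)
  exact mul_le_of_le_one_left' (ENNReal.ofReal_le_one.2 (mul_radialWeight_le_one R hr.le))

variable [CompleteSpace F]

lemma lintegral_Ioc_radialWeight_mul_sq_le {h : ℝ → F} (hh : DifferentiableOn ℝ h (Set.Ioi 0))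
    {R : ℝ} (hR : 0 < R) :
    ∫⁻ r in Set.Ioc (0 : ℝ) 1, ENNReal.ofReal (r * radialWeight R r) * ‖h r‖ₑ ^ 2 ≤
      ENNReal.ofReal (4 * (1 + log⁺ R⁻¹) ^ 2) * rayEnergy h := by
  have posLog_nonneg : 0 ≤ log⁺ R⁻¹ := Real.posLog_nonneg
  have pointwise : ∀ r ∈ Set.Ioc (0 : ℝ) 1, ENNReal.ofReal (r * radialWeight R r) * ‖h r‖ₑ ^ 2 ≤
      ENNReal.ofReal (4 * (1 + log⁺ R⁻¹)) * ENNReal.ofReal (max R r)⁻¹ * rayEnergy h := by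
    rintro r ⟨hr, hr1⟩
    have weight_nonneg : 0 ≤ r * radialWeight R r := mul_nonneg hr.le (radialWeight_nonneg R r)
    calc _ ≤ ENNReal.ofReal (r * radialWeight R r) *
          (ENNReal.ofReal (2 * (1 + Real.log (2 / r))) * rayEnergy h) := by
            gcongr; exact enorm_sq_le_log_mul_rayEnergy hh hr hr1
      _ ≤ _ := by
            rw [← mul_assoc, ← ENNReal.ofReal_mul weight_nonneg,
              ← ENNReal.ofReal_mul (by positivity)]
            exact mul_le_mul_left (ENNReal.ofReal_le_ofReal (mul_radialWeight_mul_log_le hR hr)) _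
  calc _ ≤ ∫⁻ r in Set.Ioc (0 : ℝ) 1,
          ENNReal.ofReal (4 * (1 + log⁺ R⁻¹)) * ENNReal.ofReal (max R r)⁻¹ * rayEnergy h :=
        setLIntegral_mono' measurableSet_Ioc pointwise
    _ = ENNReal.ofReal (4 * (1 + log⁺ R⁻¹)) *
          (∫⁻ r in Set.Ioc (0 : ℝ) 1, ENNReal.ofReal (max R r)⁻¹) * rayEnergy h := by
        rw [lintegral_mul_const _ (by fun_prop), lintegral_const_mul _ (by fun_prop)]
    _ ≤ ENNReal.ofReal (4 * (1 + log⁺ R⁻¹)) * ENNReal.ofReal (1 + log⁺ R⁻¹) * rayEnergy h := by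
        gcongr; exact lintegral_Ioc_inv_max_le hR
    _ = _ := by rw [← ENNReal.ofReal_mul (by positivity), mul_assoc 4, ← sq]

lemma lintegral_Ioi_radialWeight_mul_sq_le {h : ℝ → F} (hh : DifferentiableOn ℝ h (Set.Ioi 0))
    {R : ℝ} (hR : 0 < R) :
    ∫⁻ r in Set.Ioi (0 : ℝ), ENNReal.ofReal (r * radialWeight R r) * ‖h r‖ₑ ^ 2 ≤
      ENNReal.ofReal (5 * (1 + log⁺ R⁻¹) ^ 2) * rayEnergy h := by
  have posLog_nonneg : 0 ≤ log⁺ R⁻¹ := Real.posLog_nonneg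
  rw [← Set.Ioc_union_Ioi_eq_Ioi zero_le_one]
  calc _ ≤ ENNReal.ofReal (4 * (1 + log⁺ R⁻¹) ^ 2) * rayEnergy h + rayEnergy h :=
        (lintegral_union_le _ _ _).trans (add_le_add (lintegral_Ioc_radialWeight_mul_sq_le hh hR)
          (lintegral_Ioi_one_radialWeight_mul_sq_le h R))
    _ = ENNReal.ofReal (4 * (1 + log⁺ R⁻¹) ^ 2 + 1) * rayEnergy h := by
        rw [ENNReal.ofReal_add (by positivity) zero_le_one, ENNReal.ofReal_one, add_mul, one_mul]
    _ ≤ _ := by gcongr; nlinarith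

end RadialWeight

section Energy

open scoped Real

variable {E F : Type*} [NormedAddCommGroup E] [NormedSpace ℝ E] [NormedAddCommGroup F]
  [NormedSpace ℝ F]

lemma fderiv_comp_const_sub (ψ : E → F) (x u : E) :
    fderiv ℝ (fun v => ψ (x - v)) u = -fderiv ℝ ψ (x - u) := by
  have sub_eq_neg_sub (v : E) : x - v = -(v - x) := (neg_sub v x).symm
  have fderiv_comp_neg (v : E) : fderiv ℝ (fun w => ψ (-w)) v = -fderiv ℝ ψ (-v) := by
    refine ((ContinuousLinearEquiv.neg ℝ).comp_right_fderiv (f := ψ) (x := v)).trans ?_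
    ext w
    simp
  simp only [sub_eq_neg_sub]
  rw [fderiv_comp_sub (f := fun w => ψ (-w)), fderiv_comp_neg]

lemma rayEnergy_le_of_differentiable {ψ : E → F} (hψ : Differentiable ℝ ψ) {θ : E}
    (hθ : ‖θ‖ = 1) :
    rayEnergy (fun r : ℝ => ψ (r • θ)) ≤ ∫⁻ r in Set.Ioi (0 : ℝ),
      ENNReal.ofReal r * (‖ψ (r • θ)‖ₑ ^ 2 + ‖fderiv ℝ ψ (r • θ)‖ₑ ^ 2) := by
  refine lintegral_mono fun r => ?_
  have deriv_ray : deriv (fun r : ℝ => ψ (r • θ)) r = fderiv ℝ ψ (r • θ) θ := by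
    have ray : HasDerivAt (fun r : ℝ => r • θ) θ r := by
      simpa only [id_eq, one_smul] using (hasDerivAt_id' r).smul_const θ
    exact ((hψ _).hasFDerivAt.comp_hasDerivAt r ray).deriv
  have enorm_le : ‖fderiv ℝ ψ (r • θ) θ‖ₑ ≤ ‖fderiv ℝ ψ (r • θ)‖ₑ := by
    simpa [← ofReal_norm, hθ] using (fderiv ℝ ψ (r • θ)).le_opENorm θ
  dsimp only
  rw [deriv_ray]
  gcongr

variable [MeasurableSpace E]

/-- The squared `H¹` norm `∫ (‖ψ‖² + ‖∇ψ‖²) dμ`, for functions between normed spaces. -/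
def h1Energy (μ : Measure E) (ψ : E → F) : ℝ≥0∞ :=
  ∫⁻ x, (‖ψ x‖ₑ ^ 2 + ‖fderiv ℝ ψ x‖ₑ ^ 2) ∂μ

lemma eLpNorm_fderiv_sq_le_h1Energy (μ : Measure E) (ψ : E → F) :
    eLpNorm (fderiv ℝ ψ) 2 μ ^ 2 ≤ h1Energy μ ψ := by
  rw [eLpNorm_two_sq]
  exact lintegral_mono fun _ => le_add_self

lemma h1Energy_comp_const_sub [BorelSpace E] (μ : Measure E) [μ.IsAddLeftInvariant]
    [μ.IsNegInvariant] (ψ : E → F) (x : E) :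
    h1Energy μ (fun v => ψ (x - v)) = h1Energy μ ψ := by
  simp only [h1Energy, fderiv_comp_const_sub, enorm_neg]
  exact lintegral_sub_left_eq_self (fun u => ‖ψ u‖ₑ ^ 2 + ‖fderiv ℝ ψ u‖ₑ ^ 2) x

variable [CompleteSpace F]

lemma lintegral_radialWeight_norm_mul_sq_le [BorelSpace E]
    (hE : Module.finrank ℝ E = 2) (μ : Measure E) [μ.IsAddHaarMeasure] {ψ : E → F}
    (hψ : Differentiable ℝ ψ) {R : ℝ} (hR : 0 < R) :
    ∫⁻ u, ENNReal.ofReal (radialWeight R ‖u‖) * ‖ψ u‖ₑ ^ 2 ∂μ ≤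
      ENNReal.ofReal (5 * (1 + log⁺ R⁻¹) ^ 2) * h1Energy μ ψ := by
  have : FiniteDimensional ℝ E := .of_finrank_pos (by lia)
  have : Nontrivial E := Module.nontrivial_of_finrank_pos (R := ℝ) (by lia)
  have measurable_enorm : Measurable fun u => ‖ψ u‖ₑ := hψ.continuous.enorm.measurable
  rw [h1Energy, lintegral_eq_lintegral_toSphere μ (by fun_prop),
    lintegral_eq_lintegral_toSphere μ (by fun_prop),
    ← lintegral_const_mul' _ _ ENNReal.ofReal_ne_top]
  simp only [hE, Nat.add_one_sub_one, pow_one]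
  refine lintegral_mono fun θ => ?_
  have norm_θ : ‖(θ : E)‖ = 1 := norm_eq_of_mem_sphere θ
  have differentiable_ray : Differentiable ℝ fun r : ℝ => ψ (r • (θ : E)) := by fun_prop
  calc _ = ∫⁻ r in Set.Ioi (0 : ℝ),
          ENNReal.ofReal (r * radialWeight R r) * ‖ψ (r • (θ : E))‖ₑ ^ 2 := by
        refine setLIntegral_congr_fun measurableSet_Ioi fun r hr => ?_
        rw [norm_smul, norm_θ, mul_one, Real.norm_of_nonneg (Set.mem_Ioi.1 hr).le, ← mul_assoc,
          ← ENNReal.ofReal_mul (Set.mem_Ioi.1 hr).le]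
    _ ≤ _ := (lintegral_Ioi_radialWeight_mul_sq_le differentiable_ray.differentiableOn hR).trans
        (mul_le_mul_right (rayEnergy_le_of_differentiable hψ norm_θ) _)

end Energy

section Kernel

open scoped Real

lemma norm_perp (x : E2) : ‖perp x‖ = ‖x‖ := by
  simp [perp, EuclideanSpace.norm_eq, Fin.sum_univ_two, add_comm]

lemma enorm_K_sq (R : ℝ) (x : E2) : ‖K R x‖ₑ ^ 2 = ENNReal.ofReal (radialWeight R ‖x‖) := by
  rw [← ofReal_norm, ← ENNReal.ofReal_pow (norm_nonneg _), K, norm_smul, norm_perp, norm_inv,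
    Real.norm_of_nonneg (sq_nonneg _), radialWeight, inv_mul_eq_div]

lemma lintegral_enorm_K_sq_mul_sq_le {F : Type*} [NormedAddCommGroup F] [NormedSpace ℝ F]
    [CompleteSpace F] {ψ : E2 → F} (hψ : Differentiable ℝ ψ) {R : ℝ} (hR : 0 < R) (x : E2) :
    ∫⁻ y, ‖K R (x - y)‖ₑ ^ 2 * ‖ψ y‖ₑ ^ 2 ≤
      ENNReal.ofReal (5 * (1 + log⁺ R⁻¹) ^ 2) * h1Energy volume ψ := by
  rw [← lintegral_sub_left_eq_self _ x, ← h1Energy_comp_const_sub volume ψ x]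
  simp only [sub_sub_self, enorm_K_sq]
  exact lintegral_radialWeight_norm_mul_sq_le finrank_euclideanSpace_fin volume
    (hψ.comp (differentiable_id.const_sub x)) hR

lemma H1_sq (φ : E2 → ℂ) : H1 φ ^ 2 = h1Energy volume φ := by
  rw [H1, ← ENNReal.rpow_natCast, ← ENNReal.rpow_mul, eLpNorm_two_sq, eLpNorm_two_sq, h1Energy,
    lintegral_add_right _ ((measurable_fderiv ℝ φ).enorm.pow_const 2)]
  norm_num

lemma eLpNorm_fderiv_sq_mul_h1Energy_le_H1_pow_four (φ : E2 → ℂ) :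
    eLpNorm (fderiv ℝ φ) 2 ^ 2 * h1Energy volume φ ≤ H1 φ ^ 4 := by
  rw [pow_mul (H1 φ) 2 2, H1_sq, sq (h1Energy volume φ)]
  exact mul_le_mul_left (eLpNorm_fderiv_sq_le_h1Energy volume φ) _

lemma one_add_posLog_inv_sq_le {R : ℝ} (hR : 0 < R) (hRe : R ≤ Real.exp (-1)) :
    (1 + log⁺ R⁻¹) ^ 2 ≤ 4 * (-Real.log R) ^ 2 := by
  have one_le_neg_log : 1 ≤ -Real.log R := by linarith [(Real.log_le_iff_le_exp hR).2 hRe]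
  rw [Real.posLog_apply, Real.log_inv, max_eq_right (by linarith)]
  nlinarith

theorem statement10_general {F G : Type*} [NormedAddCommGroup F] [NormedSpace ℝ F]
    [NormedAddCommGroup G] [NormedSpace ℝ G] [CompleteSpace G] {A : E2 → E2 →L[ℝ] F}
    (hA : AEStronglyMeasurable A) {ψ : E2 → G} (hψ : Differentiable ℝ ψ) {R : ℝ} (hR : 0 < R) :
    ∫⁻ z : E2 × E2, ENNReal.ofReal (4 * ‖A z.1 (K R (z.1 - z.2))‖ ^ 2 * ‖ψ z.2‖ ^ 2) ≤
      ENNReal.ofReal (20 * (1 + log⁺ R⁻¹) ^ 2) * (eLpNorm A 2 ^ 2 * h1Energy volume ψ) := by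
  have pointwise (x y : E2) : ENNReal.ofReal (4 * ‖A x (K R (x - y))‖ ^ 2 * ‖ψ y‖ ^ 2) ≤
      4 * ‖A x‖ₑ ^ 2 * (‖K R (x - y)‖ₑ ^ 2 * ‖ψ y‖ₑ ^ 2) := by
    rw [ENNReal.ofReal_mul (by positivity), ENNReal.ofReal_mul (by positivity),
      ENNReal.ofReal_pow (norm_nonneg _), ENNReal.ofReal_pow (norm_nonneg _), ofReal_norm,
      ofReal_norm, ENNReal.ofReal_ofNat, ← mul_assoc, mul_assoc 4 (‖A x‖ₑ ^ 2), ← mul_pow]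
    gcongr
    exact (A x).le_opENorm _
  have const_eq : ENNReal.ofReal (20 * (1 + log⁺ R⁻¹) ^ 2) =
      4 * ENNReal.ofReal (5 * (1 + log⁺ R⁻¹) ^ 2) := by
    rw [← ENNReal.ofReal_ofNat 4, ← ENNReal.ofReal_mul (by norm_num)]; ring_nf
  calc _ ≤ ∫⁻ x, ∫⁻ y, ENNReal.ofReal (4 * ‖A x (K R (x - y))‖ ^ 2 * ‖ψ y‖ ^ 2) :=
        lintegral_prod_le _
    _ ≤ ∫⁻ x, 4 * ‖A x‖ₑ ^ 2 * (ENNReal.ofReal (5 * (1 + log⁺ R⁻¹) ^ 2) * h1Energy volume ψ) := by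
        refine lintegral_mono fun x => (lintegral_mono (pointwise x)).trans ?_
        rw [lintegral_const_mul' _ _ (by finiteness)]
        gcongr
        exact lintegral_enorm_K_sq_mul_sq_le hψ hR x
    _ = 4 * eLpNorm A 2 ^ 2 * (ENNReal.ofReal (5 * (1 + log⁺ R⁻¹) ^ 2) * h1Energy volume ψ) := by
        rw [lintegral_mul_const'' _ (by fun_prop), lintegral_const_mul'' _ (by fun_prop),
          eLpNorm_two_sq]
    _ = _ := by rw [const_eq]; ring

end Kernel

/-- Estimate (2.24): there is `C > 0` such that for all `0 < R < e⁻¹` and all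
`φ ∈ H¹(ℝ², ℂ)`,
`4 ∬ |K_R(x−y)·∇φ(x)|² |φ(y)|² dx dy ≤ C |log R|² ‖φ‖_{H¹}⁴`. -/
theorem statement10 :
    ∃ C : ℝ, 0 < C ∧ ∀ R : ℝ, 0 < R → R < Real.exp (-1) →
      ∀ φ : E2 → ℂ, Differentiable ℝ φ → H1 φ < ⊤ →
        ∫⁻ z : E2 × E2,
            ENNReal.ofReal (4 * ‖fderiv ℝ φ z.1 (K R (z.1 - z.2))‖ ^ 2 * ‖φ z.2‖ ^ 2)
          ≤ ENNReal.ofReal (C * (-Real.log R) ^ 2) * H1 φ ^ 4 := by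
  exact ⟨80, by norm_num, fun R hR hRe φ hφ _ =>
    (statement10_general (measurable_fderiv ℝ φ).aestronglyMeasurable hφ hR).trans
      (mul_le_mul' (ENNReal.ofReal_le_ofReal (by linarith [one_add_posLog_inv_sq_le hR hRe.le]))
        (eLpNorm_fderiv_sq_mul_h1Energy_le_H1_pow_four φ))⟩
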